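/- Let L be a Tonelli Lagrangian on a metric graph G with critical value c, Peierls barrier h and Aubry set 𝒜. Then 𝒜 is nonempty, and every backward weak KAM solution u : G → ℝ satisfies the representation formula u(x) = min_{q∈𝒜} (u(q) + h(q,x)) for every x ∈ G. -/

import Mathlib

/-!
The action is additive under concatenation, so `h_{s+t}(x,z) ≤ h_s(x,y) + h_t(y,z)`
(`ht_triangle`), provided the infima defining `h_t` are taken over nonempty sets bounded below.
Nonemptiness (`exists_curve`) follows from connectedness, by moving at constant speed along edges;
boundedness (`exists_lower_bound`) from pointwise superlinearity, convexity and compactness.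
Nearby points lie on a common edge with close coordinates, so they can be joined in any small time
`τ` at a cost `O(τ)` (`exists_local_cost`). Hence the barrier may be bounded from above using
curves whose endpoints only converge to the prescribed ones (`peierls_le_of_tendsto`). Only the
topology of the edges is used here, not that `dist` measures length along them.

Finiteness of the barrier at the critical value forces every loop to have nonnegative critical
action, by iterating it (`loop_nonneg`). So a point `q` belongs to the Aubry set as soon as there
are arbitrarily long, almost closed curves near `q` of arbitrarily small critical action.

Nonemptiness of the Aubry set: finiteness of `h(x,x)` gives arbitrarily long loops at `x` of
bounded critical action. The critical action spent up to an intermediate time is bounded from both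
sides, since the two parts of the loop can be closed up at a bounded cost and loops are nonnegative.
By the pigeonhole principle in a compact set, two of many well-separated times have almost the same
position and almost the same action so far (`exists_almost_loop`); a limit point of these
positions is in the Aubry set.

Representation: domination gives `u(x) ≤ u(q) + h(q,x)` for every `q`. If `γ` is calibrated,
`γ(0) = x` and `q` is a limit point of `γ(t)` as `t → -∞`, then the action of `γ` between two times
is the difference of the values of `u`. Pieces between two returns near `q` give `h(q,q) ≤ 0`, and
pieces from near `q` to `x` give `h(q,x) ≤ u(x) - u(q)`, by continuity of `u`.
-/

open Filter Set

/-- A compact metric graph: finitely many edges parametrized by arc length,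
whose distance is the minimal length of unit-speed paths. -/
structure MetricGraph where
  G : Type
  [ms : MetricSpace G]
  [cs : CompactSpace G]
  E : Type
  [fE : Fintype E]
  [neE : Nonempty E]
  len : E → ℝ
  len_pos : ∀ j, 0 < len j
  σ : E → ℝ → G
  σ_lip : ∀ j, ∀ s ∈ Set.Icc (0:ℝ) (len j), ∀ t ∈ Set.Icc (0:ℝ) (len j),
    dist (σ j s) (σ j t) ≤ |s - t|
  σ_inj : ∀ j, Set.InjOn (σ j) (Set.Icc 0 (len j))
  cover : ∀ x : G, ∃ j, ∃ s ∈ Set.Icc (0:ℝ) (len j), σ j s = x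
  interiors_disjoint : ∀ i j, ∀ s ∈ Set.Ioo (0:ℝ) (len i), ∀ t ∈ Set.Ioo (0:ℝ) (len j),
    σ i s = σ j t → i = j
  path_dist : ∀ x y : G, dist x y =
    sInf {T : ℝ | 0 ≤ T ∧ ∃ γ : ℝ → G, γ 0 = x ∧ γ T = y ∧ LipschitzOnWith 1 γ (Set.Icc 0 T)}
  path_exists : ∀ x y : G, ∃ T : ℝ, 0 ≤ T ∧ ∃ γ : ℝ → G, γ 0 = x ∧ γ T = y ∧
    LipschitzOnWith 1 γ (Set.Icc 0 T)

attribute [instance] MetricGraph.ms MetricGraph.cs MetricGraph.fE MetricGraph.neE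

open MeasureTheory

namespace MetricGraph

/-- The vertex set: endpoints of edges. -/
def vertexSet (Γ : MetricGraph) : Set Γ.G :=
  {x | ∃ j, x = Γ.σ j 0 ∨ x = Γ.σ j (Γ.len j)}

/-- The curve `γ` has (edgewise) derivative `v` at time `t`: either `γ t` is a vertex,
`v = 0` and `d(γ s, γ t) = o(|s-t|)`, or `γ t` lies in the interior of an edge and `v`
is the derivative of the edge coordinate of `γ` at `t`. -/
def HasGDerivAt (Γ : MetricGraph) (γ : ℝ → Γ.G) (t v : ℝ) : Prop :=
  (γ t ∈ Γ.vertexSet ∧ v = 0 ∧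
    ∀ ε : ℝ, 0 < ε → ∃ δ : ℝ, 0 < δ ∧ ∀ s : ℝ, |s - t| < δ → dist (γ s) (γ t) ≤ ε * |s - t|) ∨
  (γ t ∉ Γ.vertexSet ∧ ∃ j : Γ.E, ∃ f : ℝ → ℝ,
    (∀ᶠ s in nhds t, Γ.σ j (f s) = γ s) ∧ (∀ᶠ s in nhds t, f s ∈ Set.Icc 0 (Γ.len j)) ∧
    HasDerivAt f v t)

/-- The (edgewise) derivative of a curve, defined by choice where it exists, `0` elsewhere. -/
noncomputable def gderiv (Γ : MetricGraph) (γ : ℝ → Γ.G) (t : ℝ) : ℝ :=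
  letI := Classical.dec (∃ v, Γ.HasGDerivAt γ t v)
  if h : ∃ v, Γ.HasGDerivAt γ t v then h.choose else 0

/-- Absolute continuity of a curve `γ : [a,b] → G`. -/
def AbsContOn (Γ : MetricGraph) (a b : ℝ) (γ : ℝ → Γ.G) : Prop :=
  ∀ ε : ℝ, 0 < ε → ∃ δ : ℝ, 0 < δ ∧ ∀ n : ℕ, ∀ c d : Fin n → ℝ,
    (∀ i, c i ∈ Set.Icc a b ∧ d i ∈ Set.Icc a b ∧ c i ≤ d i) →
    ((Set.univ : Set (Fin n)).PairwiseDisjoint fun i => Set.Ioo (c i) (d i)) →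
    (∑ i, (d i - c i)) < δ →
    (∑ i, dist (γ (c i)) (γ (d i))) < ε

/-- A function on `G` is `C¹` near a vertex `e` if its pullback to every edge
containing `e` is `C¹` near the coordinate of `e`. -/
def C1AtVertex (Γ : MetricGraph) (ψ : Γ.G → ℝ) (e : Γ.G) : Prop :=
  ∀ j, ∀ s ∈ Set.Icc (0:ℝ) (Γ.len j), Γ.σ j s = e →
    ∃ δ : ℝ, 0 < δ ∧ ContDiffOn ℝ 1 (fun τ => ψ (Γ.σ j τ))
      (Set.Icc 0 (Γ.len j) ∩ Set.Ioo (s - δ) (s + δ))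

/-- A function on `G × ℝ` is `C¹` near `(e, t)` with `e` a vertex. -/
def C1AtVertexT (Γ : MetricGraph) (ψ : Γ.G → ℝ → ℝ) (e : Γ.G) (t : ℝ) : Prop :=
  ∀ j, ∀ s ∈ Set.Icc (0:ℝ) (Γ.len j), Γ.σ j s = e →
    ∃ δ : ℝ, 0 < δ ∧ ContDiffOn ℝ 1 (fun q : ℝ × ℝ => ψ (Γ.σ j q.1) q.2)
      ((Set.Icc 0 (Γ.len j) ∩ Set.Ioo (s - δ) (s + δ)) ×ˢ Set.Ioo (t - δ) (t + δ))

end MetricGraph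

/-- A Tonelli Lagrangian on a metric graph: edgewise `C²`, strictly convex and
superlinear in the velocity, consistent at the vertices. -/
structure TonelliLagrangian (Γ : MetricGraph) where
  L : Γ.E → ℝ → ℝ → ℝ
  smooth : ∀ j, ContDiffOn ℝ 2 (fun p : ℝ × ℝ => L j p.1 p.2)
    (Set.Icc 0 (Γ.len j) ×ˢ (Set.univ : Set ℝ))
  strictconv : ∀ j, ∀ x ∈ Set.Icc (0:ℝ) (Γ.len j), StrictConvexOn ℝ (Set.univ : Set ℝ) (L j x)
  superlinear : ∀ j, ∀ x ∈ Set.Icc (0:ℝ) (Γ.len j), ∀ C : ℝ, ∃ D : ℝ, ∀ v : ℝ,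
    C * |v| - D ≤ L j x v
  vertex_consistent : ∀ i j, ∀ s ∈ Set.Icc (0:ℝ) (Γ.len i), ∀ t ∈ Set.Icc (0:ℝ) (Γ.len j),
    Γ.σ i s = Γ.σ j t → L i s 0 = L j t 0

namespace TonelliLagrangian

variable {Γ : MetricGraph}

/-- The value of the Lagrangian at a point of `G` (via a choice of edge containing it). -/
noncomputable def lagOf (Λ : TonelliLagrangian Γ) (x : Γ.G) (v : ℝ) : ℝ :=
  Λ.L (Γ.cover x).choose (Γ.cover x).choose_spec.choose v

/-- The velocity partial derivative `∂_v L` at a point of `G`. -/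
noncomputable def lagVOf (Λ : TonelliLagrangian Γ) (x : Γ.G) (v : ℝ) : ℝ :=
  deriv (fun w => Λ.L (Γ.cover x).choose (Γ.cover x).choose_spec.choose w) v

/-- The action of a curve `γ : [a,b] → G`. -/
noncomputable def action (Λ : TonelliLagrangian Γ) (a b : ℝ) (γ : ℝ → Γ.G) : ℝ :=
  ∫ t in a..b, Λ.lagOf (γ t) (Γ.gderiv γ t)

/-- The integrand of the action is integrable (i.e. the action is finite). -/
def ActionIntegrableOn (Λ : TonelliLagrangian Γ) (a b : ℝ) (γ : ℝ → Γ.G) : Prop :=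
  IntegrableOn (fun t => Λ.lagOf (γ t) (Γ.gderiv γ t)) (Set.Icc a b)

/-- An action minimizer with fixed endpoints. -/
def Minimizer (Λ : TonelliLagrangian Γ) (a b : ℝ) (γ : ℝ → Γ.G) : Prop :=
  Γ.AbsContOn a b γ ∧ Λ.ActionIntegrableOn a b γ ∧
  ∀ α : ℝ → Γ.G, Γ.AbsContOn a b α → Λ.ActionIntegrableOn a b α →
    α a = γ a → α b = γ b → Λ.action a b γ ≤ Λ.action a b α

/-- `h_t(x,y)`: minimal action among absolutely continuous curves from `x` to `y` in time `t`. -/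
noncomputable def ht (Λ : TonelliLagrangian Γ) (t : ℝ) (x y : Γ.G) : ℝ :=
  sInf {r | ∃ γ : ℝ → Γ.G, Γ.AbsContOn 0 t γ ∧ γ 0 = x ∧ γ t = y ∧
    Λ.ActionIntegrableOn 0 t γ ∧ r = Λ.action 0 t γ}

/-- `c` is the critical value of the Lagrangian. -/
def IsCriticalValue (Λ : TonelliLagrangian Γ) (c : ℝ) : Prop :=
  (∀ k : ℝ, c < k → ∀ x y : Γ.G,
    Filter.liminf (fun t : ℝ => ((Λ.ht t x y + k * t : ℝ) : EReal)) Filter.atTop = ⊤) ∧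
  (∀ k : ℝ, k < c → ∀ x y : Γ.G,
    Filter.liminf (fun t : ℝ => ((Λ.ht t x y + k * t : ℝ) : EReal)) Filter.atTop = ⊥) ∧
  (∀ x y : Γ.G, ∃ r : ℝ,
    Filter.liminf (fun t : ℝ => ((Λ.ht t x y + c * t : ℝ) : EReal)) Filter.atTop = (r : EReal))

/-- The Peierls barrier `h(x,y) = liminf_{t→∞} (h_t(x,y) + ct)`. -/
noncomputable def peierls (Λ : TonelliLagrangian Γ) (c : ℝ) (x y : Γ.G) : ℝ :=
  (Filter.liminf (fun t : ℝ => ((Λ.ht t x y + c * t : ℝ) : EReal)) Filter.atTop).toReal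

/-- The Mañé potential `Φ(x,y) = inf_{t>0} (h_t(x,y) + ct)`. -/
noncomputable def mane (Λ : TonelliLagrangian Γ) (c : ℝ) (x y : Γ.G) : ℝ :=
  sInf {r | ∃ t : ℝ, 0 < t ∧ r = Λ.ht t x y + c * t}

/-- The Aubry set: points with `h(x,x) = 0`. -/
def aubrySet (Λ : TonelliLagrangian Γ) (c : ℝ) : Set Γ.G :=
  {x | Λ.peierls c x x = 0}

/-- A dominated function: `u(y) - u(x) ≤ h_t(x,y) + ct`. -/
def Dominated (Λ : TonelliLagrangian Γ) (c : ℝ) (u : Γ.G → ℝ) : Prop :=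
  ∀ x y : Γ.G, ∀ t : ℝ, 0 < t → u y - u x ≤ Λ.ht t x y + c * t

/-- The curve `γ` calibrates the function `u` on the time interval `J`. -/
def Calibrates (Λ : TonelliLagrangian Γ) (c : ℝ) (J : Set ℝ) (γ : ℝ → Γ.G)
    (u : Γ.G → ℝ) : Prop :=
  ∀ t ∈ J, ∀ s ∈ J, t ≤ s → Λ.ActionIntegrableOn t s γ ∧
    u (γ s) - u (γ t) = Λ.action t s γ + c * (s - t)

/-- Backward weak KAM solution. -/
def BackwardWeakKAM (Λ : TonelliLagrangian Γ) (c : ℝ) (u : Γ.G → ℝ) : Prop :=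
  Continuous u ∧ Λ.Dominated c u ∧
  ∀ x : Γ.G, ∃ γ : ℝ → Γ.G, γ 0 = x ∧ (∀ a : ℝ, a ≤ 0 → Γ.AbsContOn a 0 γ) ∧
    Λ.Calibrates c (Set.Iic 0) γ u

/-- Forward weak KAM solution. -/
def ForwardWeakKAM (Λ : TonelliLagrangian Γ) (c : ℝ) (u : Γ.G → ℝ) : Prop :=
  Continuous u ∧ Λ.Dominated c u ∧
  ∀ x : Γ.G, ∃ γ : ℝ → Γ.G, γ 0 = x ∧ (∀ b : ℝ, 0 ≤ b → Γ.AbsContOn 0 b γ) ∧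
    Λ.Calibrates c (Set.Ici 0) γ u

/-- Semi-static curve on a time interval `J`. -/
def SemiStatic (Λ : TonelliLagrangian Γ) (c : ℝ) (J : Set ℝ) (η : ℝ → Γ.G) : Prop :=
  ∀ t ∈ J, ∀ s ∈ J, t ≤ s → Λ.ActionIntegrableOn t s η ∧
    Λ.mane c (η t) (η s) = Λ.action t s η + c * (s - t)

/-- The Lax–Oleinik semigroup `(ℒ_t f)(x) = inf_y (f(y) + h_t(y,x))`. -/
noncomputable def lax (Λ : TonelliLagrangian Γ) (t : ℝ) (f : Γ.G → ℝ) (x : Γ.G) : ℝ :=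
  ⨅ y : Γ.G, (f y + Λ.ht t y x)

/-- The Lagrangian is symmetric at the vertices. -/
def SymmetricAtVertices (Λ : TonelliLagrangian Γ) : Prop :=
  ∀ e ∈ Γ.vertexSet, ∃ lam : ℝ → ℝ, ∀ j, ∀ s ∈ Set.Icc (0:ℝ) (Γ.len j),
    Γ.σ j s = e → ∀ z : ℝ, Λ.L j s z = lam |z|

/-- The Hamiltonian `H_j(x,p)`, where at the endpoints of the edge only
incoming-or-zero velocities are used. -/
noncomputable def ham (Λ : TonelliLagrangian Γ) (j : Γ.E) (x p : ℝ) : ℝ :=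
  sSup {r | ∃ z : ℝ, ((x = 0 → 0 ≤ z) ∧ (x = Γ.len j → z ≤ 0)) ∧ r = -p * z - Λ.L j x z}

/-- Viscosity subsolution of `H(x, Du) = c` on the graph. -/
def ViscositySubsolution (Λ : TonelliLagrangian Γ) (c : ℝ) (u : Γ.G → ℝ) : Prop :=
  Continuous u ∧
  (∀ j : Γ.E, ∀ s ∈ Set.Ioo (0:ℝ) (Γ.len j), Γ.σ j s ∉ Γ.vertexSet →
    ∀ (φ : ℝ → ℝ) (p : ℝ), HasDerivAt φ p s →
      IsLocalMax (fun τ => u (Γ.σ j τ) - φ τ) s → Λ.ham j s p ≤ c) ∧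
  (∀ e ∈ Γ.vertexSet, ∀ ψ : Γ.G → ℝ, MetricGraph.C1AtVertex Γ ψ e →
    (∃ ε : ℝ, 0 < ε ∧ ∀ x : Γ.G, dist x e < ε → u x - ψ x ≤ u e - ψ e) →
    ∀ j : Γ.E, ∀ s ∈ Set.Icc (0:ℝ) (Γ.len j), Γ.σ j s = e →
    ∀ p : ℝ, HasDerivWithinAt (fun τ => ψ (Γ.σ j τ)) p (Set.Icc 0 (Γ.len j)) s →
      Λ.ham j s p ≤ c)

/-- Viscosity supersolution of `H(x, Du) = c` on the graph. -/
def ViscositySupersolution (Λ : TonelliLagrangian Γ) (c : ℝ) (u : Γ.G → ℝ) : Prop :=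
  Continuous u ∧
  (∀ j : Γ.E, ∀ s ∈ Set.Ioo (0:ℝ) (Γ.len j), Γ.σ j s ∉ Γ.vertexSet →
    ∀ (φ : ℝ → ℝ) (p : ℝ), HasDerivAt φ p s →
      IsLocalMin (fun τ => u (Γ.σ j τ) - φ τ) s → c ≤ Λ.ham j s p) ∧
  (∀ e ∈ Γ.vertexSet, ∀ ψ : Γ.G → ℝ, MetricGraph.C1AtVertex Γ ψ e →
    (∃ ε : ℝ, 0 < ε ∧ ∀ x : Γ.G, dist x e < ε → u e - ψ e ≤ u x - ψ x) →
    ∃ j : Γ.E, ∃ s ∈ Set.Icc (0:ℝ) (Γ.len j), Γ.σ j s = e ∧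
      ∃ p : ℝ, HasDerivWithinAt (fun τ => ψ (Γ.σ j τ)) p (Set.Icc 0 (Γ.len j)) s ∧
      c ≤ Λ.ham j s p)

/-- Viscosity subsolution of `u_t + H(x, D_x u) = 0` on `G × (0,T]`. -/
def EvoSubsolution (Λ : TonelliLagrangian Γ) (T : ℝ) (u : Γ.G → ℝ → ℝ) : Prop :=
  Continuous (fun q : Γ.G × ℝ => u q.1 q.2) ∧
  (∀ j : Γ.E, ∀ s ∈ Set.Ioo (0:ℝ) (Γ.len j), Γ.σ j s ∉ Γ.vertexSet →
    ∀ t ∈ Set.Ioc (0:ℝ) T, ∀ (φ : ℝ → ℝ → ℝ) (p q : ℝ),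
      HasDerivAt (fun τ => φ τ t) p s → HasDerivAt (fun r => φ s r) q t →
      (∃ ε : ℝ, 0 < ε ∧ ∀ τ r : ℝ, |τ - s| < ε → |r - t| < ε →
        u (Γ.σ j τ) r - φ τ r ≤ u (Γ.σ j s) t - φ s t) →
      q + Λ.ham j s p ≤ 0) ∧
  (∀ e ∈ Γ.vertexSet, ∀ t ∈ Set.Ioc (0:ℝ) T, ∀ ψ : Γ.G → ℝ → ℝ,
    MetricGraph.C1AtVertexT Γ ψ e t →
    (∃ ε : ℝ, 0 < ε ∧ ∀ x : Γ.G, ∀ r : ℝ, dist x e < ε → |r - t| < ε →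
      u x r - ψ x r ≤ u e t - ψ e t) →
    ∀ q : ℝ, HasDerivAt (fun r => ψ e r) q t →
    ∀ j : Γ.E, ∀ s ∈ Set.Icc (0:ℝ) (Γ.len j), Γ.σ j s = e →
    ∀ p : ℝ, HasDerivWithinAt (fun τ => ψ (Γ.σ j τ) t) p (Set.Icc 0 (Γ.len j)) s →
      q + Λ.ham j s p ≤ 0)

/-- Viscosity supersolution of `u_t + H(x, D_x u) = 0` on `G × (0,T]`. -/
def EvoSupersolution (Λ : TonelliLagrangian Γ) (T : ℝ) (u : Γ.G → ℝ → ℝ) : Prop :=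
  Continuous (fun q : Γ.G × ℝ => u q.1 q.2) ∧
  (∀ j : Γ.E, ∀ s ∈ Set.Ioo (0:ℝ) (Γ.len j), Γ.σ j s ∉ Γ.vertexSet →
    ∀ t ∈ Set.Ioc (0:ℝ) T, ∀ (φ : ℝ → ℝ → ℝ) (p q : ℝ),
      HasDerivAt (fun τ => φ τ t) p s → HasDerivAt (fun r => φ s r) q t →
      (∃ ε : ℝ, 0 < ε ∧ ∀ τ r : ℝ, |τ - s| < ε → |r - t| < ε →
        u (Γ.σ j s) t - φ s t ≤ u (Γ.σ j τ) r - φ τ r) →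
      0 ≤ q + Λ.ham j s p) ∧
  (∀ e ∈ Γ.vertexSet, ∀ t ∈ Set.Ioc (0:ℝ) T, ∀ ψ : Γ.G → ℝ → ℝ,
    MetricGraph.C1AtVertexT Γ ψ e t →
    (∃ ε : ℝ, 0 < ε ∧ ∀ x : Γ.G, ∀ r : ℝ, dist x e < ε → |r - t| < ε →
      u e t - ψ e t ≤ u x r - ψ x r) →
    ∀ q : ℝ, HasDerivAt (fun r => ψ e r) q t →
    ∃ j : Γ.E, ∃ s ∈ Set.Icc (0:ℝ) (Γ.len j), Γ.σ j s = e ∧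
      ∃ p : ℝ, HasDerivWithinAt (fun τ => ψ (Γ.σ j τ) t) p (Set.Icc 0 (Γ.len j)) s ∧
      0 ≤ q + Λ.ham j s p)

end TonelliLagrangian

open scoped Topology

/-! ### Geometry of the graph and edgewise derivatives -/

namespace MetricGraph

variable {Γ : MetricGraph}

lemma vertexSet_finite (Γ : MetricGraph) : Γ.vertexSet.Finite := by
  have h : Γ.vertexSet ⊆ Set.range (fun j => Γ.σ j 0) ∪ Set.range (fun j => Γ.σ j (Γ.len j)) := by
    rintro x ⟨j, rfl | rfl⟩
    · exact Or.inl ⟨j, rfl⟩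
    · exact Or.inr ⟨j, rfl⟩
  exact ((Set.finite_range _).union (Set.finite_range _)).subset h

lemma σ_continuousOn (Γ : MetricGraph) (j : Γ.E) : ContinuousOn (Γ.σ j) (Icc 0 (Γ.len j)) := by
  have h : LipschitzOnWith 1 (Γ.σ j) (Icc 0 (Γ.len j)) :=
    LipschitzOnWith.of_dist_le_mul fun s hs t ht => by
      simpa [Real.dist_eq] using Γ.σ_lip j s hs t ht
  exact h.continuousOn

/-- A point which is not a vertex has a unique edge coordinate. -/
lemma coord_unique {i j : Γ.E} {s t : ℝ} (hs : s ∈ Icc 0 (Γ.len i)) (ht : t ∈ Icc 0 (Γ.len j))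
    (hv : Γ.σ i s ∉ Γ.vertexSet) (h : Γ.σ i s = Γ.σ j t) : i = j ∧ s = t := by
  have interior : ∀ (k : Γ.E) (r : ℝ), r ∈ Icc 0 (Γ.len k) → Γ.σ k r ∉ Γ.vertexSet →
      r ∈ Ioo 0 (Γ.len k) := by
    intro k r hr hk
    refine ⟨lt_of_le_of_ne hr.1 ?_, lt_of_le_of_ne hr.2 ?_⟩
    · rintro rfl; exact hk ⟨k, Or.inl rfl⟩
    · rintro rfl; exact hk ⟨k, Or.inr rfl⟩
  obtain rfl := Γ.interiors_disjoint i j s (interior i s hs hv) t (interior j t ht (h ▸ hv)) h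
  exact ⟨rfl, Γ.σ_inj i hs ht h⟩

lemma HasGDerivAt.unique {γ : ℝ → Γ.G} {t v w : ℝ} (hv : Γ.HasGDerivAt γ t v)
    (hw : Γ.HasGDerivAt γ t w) : v = w := by
  rcases hv with ⟨hx, rfl, -⟩ | ⟨hx, i, f, hf, hfm, hfd⟩
  · rcases hw with ⟨-, rfl, -⟩ | ⟨hx', -⟩
    · rfl
    · exact absurd hx hx'
  · rcases hw with ⟨hx', -, -⟩ | ⟨-, j, g, hg, hgm, hgd⟩
    · exact absurd hx' hx
    · have h0 : i = j := by
        refine (coord_unique hfm.self_of_nhds hgm.self_of_nhds ?_ ?_).1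
        · rw [hf.self_of_nhds]; exact hx
        · rw [hf.self_of_nhds, hg.self_of_nhds]
      subst h0
      have : f =ᶠ[𝓝 t] g := by
        filter_upwards [hf, hfm, hg, hgm] with s h1 h2 h3 h4
        exact Γ.σ_inj i h2 h4 (h1.trans h3.symm)
      exact hfd.unique (hgd.congr_of_eventuallyEq this)

lemma HasGDerivAt.gderiv_eq {γ : ℝ → Γ.G} {t v : ℝ} (hv : Γ.HasGDerivAt γ t v) :
    Γ.gderiv γ t = v := by
  have h : ∃ v, Γ.HasGDerivAt γ t v := ⟨v, hv⟩
  unfold gderiv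
  rw [dif_pos h]
  exact h.choose_spec.unique hv

lemma gderiv_eq_of_iff {γ η : ℝ → Γ.G} {s t : ℝ}
    (h : ∀ v, Γ.HasGDerivAt γ s v ↔ Γ.HasGDerivAt η t v) : Γ.gderiv γ s = Γ.gderiv η t := by
  by_cases hv : ∃ v, Γ.HasGDerivAt η t v
  · obtain ⟨v, hv⟩ := hv
    rw [hv.gderiv_eq, ((h v).2 hv).gderiv_eq]
  · have hv' : ¬∃ v, Γ.HasGDerivAt γ s v := by simpa only [h] using hv
    unfold gderiv
    rw [dif_neg hv, dif_neg hv']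

lemma HasGDerivAt.congr {γ η : ℝ → Γ.G} {t v : ℝ} (h : γ =ᶠ[𝓝 t] η)
    (hv : Γ.HasGDerivAt γ t v) : Γ.HasGDerivAt η t v := by
  have h0 : γ t = η t := h.self_of_nhds
  rcases hv with ⟨hx, rfl, hd⟩ | ⟨hx, i, f, hf, hfm, hfd⟩
  · refine Or.inl ⟨h0 ▸ hx, rfl, fun ε hε => ?_⟩
    obtain ⟨δ, hδ, H⟩ := hd ε hε
    obtain ⟨δ', hδ', H'⟩ := Metric.eventually_nhds_iff.1 h
    refine ⟨min δ δ', lt_min hδ hδ', fun s hs => ?_⟩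
    rw [← h0, ← H' (by rw [Real.dist_eq]; exact hs.trans_le (min_le_right _ _))]
    exact H s (hs.trans_le (min_le_left _ _))
  · refine Or.inr ⟨h0 ▸ hx, i, f, ?_, hfm, hfd⟩
    filter_upwards [hf, h] with s h1 h2
    rw [h1, h2]

/-- The edgewise derivative is a local notion. -/
lemma gderiv_congr {γ η : ℝ → Γ.G} {t : ℝ} (h : γ =ᶠ[𝓝 t] η) :
    Γ.gderiv γ t = Γ.gderiv η t := by
  exact gderiv_eq_of_iff fun v => ⟨fun hv => hv.congr h, fun hv => hv.congr h.symm⟩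

lemma HasGDerivAt.shift {γ : ℝ → Γ.G} {t v : ℝ} (a : ℝ)
    (hv : Γ.HasGDerivAt γ (t + a) v) : Γ.HasGDerivAt (fun s => γ (s + a)) t v := by
  have hc : Tendsto (fun s : ℝ => s + a) (𝓝 t) (𝓝 (t + a)) :=
    (continuous_id.add continuous_const).tendsto t
  rcases hv with ⟨hx, rfl, hd⟩ | ⟨hx, i, f, hf, hfm, hfd⟩
  · refine Or.inl ⟨hx, rfl, fun ε hε => ?_⟩
    obtain ⟨δ, hδ, H⟩ := hd ε hε
    refine ⟨δ, hδ, fun s hs => ?_⟩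
    have := H (s + a) (by simpa using hs)
    simpa using this
  · exact Or.inr ⟨hx, i, fun s => f (s + a), hc.eventually hf, hc.eventually hfm,
      hfd.comp_add_const t a⟩

lemma gderiv_shift (γ : ℝ → Γ.G) (t a : ℝ) :
    Γ.gderiv (fun s => γ (s + a)) t = Γ.gderiv γ (t + a) := by
  refine gderiv_eq_of_iff fun v => ⟨fun hv => ?_, fun hv => hv.shift a⟩
  have hv' : Γ.HasGDerivAt (fun s => γ (s + a)) ((t + a) + -a) v := by simpa using hv
  simpa using hv'.shift (-a)

lemma AbsContOn.mono {a b a' b' : ℝ} {γ : ℝ → Γ.G} (h : Γ.AbsContOn a b γ) (ha : a ≤ a')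
    (hb : b' ≤ b) : Γ.AbsContOn a' b' γ := by
  intro ε hε
  obtain ⟨δ, hδ, H⟩ := h ε hε
  exact ⟨δ, hδ, fun n c d h1 => H n c d fun i =>
    ⟨Icc_subset_Icc ha hb (h1 i).1, Icc_subset_Icc ha hb (h1 i).2.1, (h1 i).2.2⟩⟩

lemma AbsContOn.congr {a b : ℝ} {γ η : ℝ → Γ.G} (h : Γ.AbsContOn a b γ)
    (he : ∀ s ∈ Icc a b, γ s = η s) : Γ.AbsContOn a b η := by
  intro ε hε
  obtain ⟨δ, hδ, H⟩ := h ε hε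
  refine ⟨δ, hδ, fun n c d h1 h2 h3 => ?_⟩
  have := H n c d h1 h2 h3
  refine lt_of_eq_of_lt (Finset.sum_congr rfl fun i _ => ?_) this
  rw [he _ (h1 i).1, he _ (h1 i).2.1]

lemma AbsContOn.shift {a b : ℝ} {γ : ℝ → Γ.G} (r : ℝ) (h : Γ.AbsContOn (a + r) (b + r) γ) :
    Γ.AbsContOn a b (fun s => γ (s + r)) := by
  intro ε hε
  obtain ⟨δ, hδ, H⟩ := h ε hε
  refine ⟨δ, hδ, fun n c d h1 h2 h3 => ?_⟩
  refine H n (fun i => c i + r) (fun i => d i + r) (fun i => ?_) ?_ ?_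
  · have := h1 i
    simp only [mem_Icc] at this ⊢
    grind
  · intro i _ j _ hij
    have := h2 (mem_univ i) (mem_univ j) hij
    simp only [Function.onFun] at this ⊢
    rw [Set.disjoint_left] at this ⊢
    intro x hx hx'
    exact this (a := x - r) ⟨by linarith [hx.1], by linarith [hx.2]⟩
      ⟨by linarith [hx'.1], by linarith [hx'.2]⟩
  · simpa using h3

lemma AbsContOn.concat {a m b : ℝ} {γ : ℝ → Γ.G} (ham : a ≤ m) (hmb : m ≤ b)
    (h1 : Γ.AbsContOn a m γ) (h2 : Γ.AbsContOn m b γ) : Γ.AbsContOn a b γ := by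
  intro ε hε
  obtain ⟨δ₁, hδ₁, H₁⟩ := h1 (ε / 2) (half_pos hε)
  obtain ⟨δ₂, hδ₂, H₂⟩ := h2 (ε / 2) (half_pos hε)
  refine ⟨min δ₁ δ₂, lt_min hδ₁ hδ₂, fun n c d hcd hdis hsum => ?_⟩
  -- cut every interval `(c i, d i)` at the junction time `m`
  have A := H₁ n (fun i => min (c i) m) (fun i => min (d i) m) (fun i => ?_) ?_ ?_
  · have B := H₂ n (fun i => max (c i) m) (fun i => max (d i) m) (fun i => ?_) ?_ ?_
    · have : ∑ i, dist (γ (c i)) (γ (d i)) ≤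
          ∑ i, dist (γ (min (c i) m)) (γ (min (d i) m)) +
            ∑ i, dist (γ (max (c i) m)) (γ (max (d i) m)) := by
        rw [← Finset.sum_add_distrib]
        refine Finset.sum_le_sum fun i _ => ?_
        have hle := (hcd i).2.2
        rcases le_total (d i) m with h | h
        · simp [h, hle.trans h]
        · rcases le_total (c i) m with h' | h'
          · simpa [h, h'] using dist_triangle (γ (c i)) (γ m) (γ (d i))
          · simp [h, h']
      linarith
    · have := hcd i
      simp only [mem_Icc] at this ⊢
      grind
    · intro i _ j _ hij
      refine (hdis (mem_univ i) (mem_univ j) hij).mono ?_ ?_ <;>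
      · intro x hx
        simp only [mem_Ioo] at hx ⊢
        grind
    · refine lt_of_le_of_lt (Finset.sum_le_sum fun i _ => ?_) (hsum.trans_le (min_le_right _ _))
      have := (hcd i).2.2
      grind
  · have := hcd i
    simp only [mem_Icc] at this ⊢
    grind
  · intro i _ j _ hij
    refine (hdis (mem_univ i) (mem_univ j) hij).mono ?_ ?_ <;>
    · intro x hx
      simp only [mem_Ioo] at hx ⊢
      grind
  · refine lt_of_le_of_lt (Finset.sum_le_sum fun i _ => ?_) (hsum.trans_le (min_le_left _ _))
    have := (hcd i).2.2
    grind

lemma absContOn_of_lipschitz {a b K : ℝ} {γ : ℝ → Γ.G}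
    (h : ∀ s ∈ Icc a b, ∀ t ∈ Icc a b, dist (γ s) (γ t) ≤ K * |s - t|) :
    Γ.AbsContOn a b γ := by
  intro ε hε
  have hK : 0 < |K| + 1 := by positivity
  refine ⟨ε / (|K| + 1), by positivity, fun n c d hcd _ hsum => ?_⟩
  rw [lt_div_iff₀ hK, mul_comm, Finset.mul_sum] at hsum
  refine lt_of_le_of_lt (Finset.sum_le_sum fun i _ => ?_) hsum
  refine (h _ (hcd i).1 _ (hcd i).2.1).trans ?_
  have h0 : 0 ≤ d i - c i := by linarith [(hcd i).2.2]
  rw [abs_sub_comm, abs_of_nonneg h0]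
  exact mul_le_mul_of_nonneg_right (by linarith [le_abs_self K]) h0

instance preconnected (Γ : MetricGraph) : PreconnectedSpace Γ.G := by
  refine ⟨isPreconnected_of_forall_pair fun x _ y _ => ?_⟩
  obtain ⟨T, hT, γ, h0, h1, hL⟩ := Γ.path_exists x y
  exact ⟨γ '' Icc 0 T, subset_univ _, ⟨0, ⟨le_rfl, hT⟩, h0⟩, ⟨T, ⟨hT, le_rfl⟩, h1⟩,
    isPreconnected_Icc.image _ hL.continuousOn⟩

/-- Points close to `q` share an edge with `q`, with close edge coordinates. No comparison of
`dist` with the edge coordinate is needed: only compactness of the edges and injectivity of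
their parametrizations enter. -/
lemma eventually_same_edge (Γ : MetricGraph) (q : Γ.G) {η : ℝ} (hη : 0 < η) :
    ∀ᶠ p in 𝓝 q, ∃ j, ∃ s ∈ Icc 0 (Γ.len j), ∃ r ∈ Icc 0 (Γ.len j),
      Γ.σ j s = q ∧ Γ.σ j r = p ∧ |r - s| < η := by
  have key : ∀ j : Γ.E, ∀ᶠ p in 𝓝 q, ∀ r ∈ Icc 0 (Γ.len j), Γ.σ j r = p →
      ∃ s ∈ Icc 0 (Γ.len j), Γ.σ j s = q ∧ |r - s| < η := by
    intro j
    let K : Set ℝ := Icc 0 (Γ.len j) ∩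
      ⋂ s ∈ {s | s ∈ Icc 0 (Γ.len j) ∧ Γ.σ j s = q}, {r | η ≤ |r - s|}
    have hK : IsCompact K := isCompact_Icc.inter_right
      (isClosed_biInter fun s _ => isClosed_le continuous_const (by fun_prop))
    have hKq : q ∉ Γ.σ j '' K := by
      rintro ⟨r, hr, hrq⟩
      have := mem_iInter₂.1 hr.2 r ⟨hr.1, hrq⟩
      simp only [mem_ofPred_eq, sub_self, abs_zero] at this
      linarith
    have hcl : IsClosed (Γ.σ j '' K) :=
      (hK.image_of_continuousOn ((Γ.σ_continuousOn j).mono inter_subset_left)).isClosed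
    filter_upwards [hcl.isOpen_compl.mem_nhds hKq] with p hp r hr hrp
    by_contra hcon
    push Not at hcon
    exact hp ⟨r, ⟨hr, mem_iInter₂.2 fun s hs => hcon s hs.1 hs.2⟩, hrp⟩
  filter_upwards [eventually_all.2 key] with p hp
  obtain ⟨j, r, hr, hrp⟩ := Γ.cover p
  obtain ⟨s, hs, hsq, hlt⟩ := hp j r hr hrp
  exact ⟨j, s, hs, r, hr, hsq, hrp, hlt⟩

end MetricGraph

/-! ### Bounds on the Lagrangian -/

namespace TonelliLagrangian

variable {Γ : MetricGraph}

lemma L_continuousOn (Λ : TonelliLagrangian Γ) (j : Γ.E) :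
    ContinuousOn (fun p : ℝ × ℝ => Λ.L j p.1 p.2) (Icc 0 (Γ.len j) ×ˢ univ) :=
  (Λ.smooth j).continuousOn

lemma L_continuousOn_left (Λ : TonelliLagrangian Γ) (j : Γ.E) (v : ℝ) :
    ContinuousOn (fun s => Λ.L j s v) (Icc 0 (Γ.len j)) :=
  (Λ.L_continuousOn j).comp (f := fun s : ℝ => (s, v)) (by fun_prop) fun s hs => ⟨hs, mem_univ _⟩

/-- `L` is bounded on bounded sets of velocities. -/
lemma exists_abs_bound (Λ : TonelliLagrangian Γ) (R : ℝ) :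
    ∃ M : ℝ, ∀ j, ∀ s ∈ Icc 0 (Γ.len j), ∀ v, |v| ≤ R → |Λ.L j s v| ≤ M := by
  have h : ∀ j, ∃ M : ℝ, ∀ s ∈ Icc 0 (Γ.len j), ∀ v, |v| ≤ R → |Λ.L j s v| ≤ M := by
    intro j
    have hK : IsCompact (Icc 0 (Γ.len j) ×ˢ Icc (-R) R) := isCompact_Icc.prod isCompact_Icc
    obtain ⟨M, hM⟩ := hK.exists_bound_of_continuousOn
      ((Λ.L_continuousOn j).mono (prod_mono_right (subset_univ _)))
    exact ⟨M, fun s hs v hv => hM (s, v) ⟨hs, abs_le.1 hv⟩⟩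
  choose M hM using h
  obtain ⟨B, hB⟩ := (Set.finite_range M).bddAbove
  exact ⟨B, fun j s hs v hv => (hM j s hs v hv).trans (hB ⟨j, rfl⟩)⟩

/-- Superlinearity at each point, convexity and compactness of the edges give a lower bound of
`L` on the whole of `G × ℝ`. -/
lemma exists_lower_bound (Λ : TonelliLagrangian Γ) :
    ∃ D : ℝ, ∀ j, ∀ s ∈ Icc 0 (Γ.len j), ∀ v, D ≤ Λ.L j s v := by
  have h : ∀ j, ∃ D : ℝ, ∀ s ∈ Icc 0 (Γ.len j), ∀ v, D ≤ Λ.L j s v := by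
    intro j
    refine (isCompact_Icc (a := (0 : ℝ)) (b := Γ.len j)).induction_on
      (p := fun S => ∃ D : ℝ, ∀ s ∈ S, ∀ v, D ≤ Λ.L j s v) ⟨0, by simp⟩ ?_ ?_ ?_
    · rintro S T hST ⟨D, hD⟩
      exact ⟨D, fun s hs => hD s (hST hs)⟩
    · rintro S T ⟨D, hD⟩ ⟨D', hD'⟩
      refine ⟨min D D', ?_⟩
      rintro s (hs | hs) v
      · exact (min_le_left _ _).trans (hD s hs v)
      · exact (min_le_right _ _).trans (hD' s hs v)
    · intro s₀ hs₀
      obtain ⟨D₀, hD₀⟩ := Λ.superlinear j s₀ hs₀ 1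
      -- a velocity `R` with `L(s₀, ±R) > L(s₀, 0)`; by convexity `L(s, v) ≥ L(s, 0)` for
      -- `|v| ≥ R` and `s` near `s₀`
      set R : ℝ := |Λ.L j s₀ 0| + |D₀| + 1 with hR
      have hRpos : 0 < R := by positivity
      obtain ⟨M, hM⟩ := Λ.exists_abs_bound R
      have hp : Λ.L j s₀ 0 < Λ.L j s₀ R := by
        have := hD₀ R
        rw [abs_of_pos hRpos] at this
        linarith [le_abs_self (Λ.L j s₀ 0), le_abs_self D₀]
      have hn : Λ.L j s₀ 0 < Λ.L j s₀ (-R) := by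
        have := hD₀ (-R)
        rw [abs_neg, abs_of_pos hRpos] at this
        linarith [le_abs_self (Λ.L j s₀ 0), le_abs_self D₀]
      have e0 := Λ.L_continuousOn_left j 0 s₀ hs₀
      have ep := e0.eventually_lt (Λ.L_continuousOn_left j R s₀ hs₀) hp
      have en := e0.eventually_lt (Λ.L_continuousOn_left j (-R) s₀ hs₀) hn
      refine ⟨_, inter_mem (inter_mem ep en) self_mem_nhdsWithin, -M, ?_⟩
      rintro s ⟨⟨hsp, hsn⟩, hs⟩ v
      simp only [mem_ofPred_eq] at hsp hsn
      have hconv := (Λ.strictconv j s hs).convexOn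
      have h0 : -M ≤ Λ.L j s 0 := (abs_le.1 (hM j s hs 0 (by simpa using hRpos.le))).1
      rcases le_or_gt |v| R with hv | hv
      · exact (abs_le.1 (hM j s hs v hv)).1
      · rcases lt_abs.1 hv with hv | hv
        · have := hconv.le_max_of_mem_Icc (mem_univ 0) (mem_univ v)
            (⟨hRpos.le, hv.le⟩ : R ∈ Icc 0 v)
          rcases le_max_iff.1 this with h | h <;> linarith
        · have := hconv.le_max_of_mem_Icc (mem_univ v) (mem_univ 0)
            (⟨by linarith, by linarith⟩ : -R ∈ Icc v 0)
          rcases le_max_iff.1 this with h | h <;> linarith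
  choose D hD using h
  obtain ⟨B, hB⟩ := (Set.finite_range D).bddBelow
  exact ⟨B, fun j s hs v => (hB ⟨j, rfl⟩).trans (hD j s hs v)⟩

lemma exists_lagOf_lower (Λ : TonelliLagrangian Γ) : ∃ D : ℝ, ∀ x v, D ≤ Λ.lagOf x v := by
  obtain ⟨D, hD⟩ := Λ.exists_lower_bound
  exact ⟨D, fun x v => hD _ _ (Γ.cover x).choose_spec.choose_spec.1 v⟩

lemma lagOf_of_not_vertex (Λ : TonelliLagrangian Γ) {j : Γ.E} {s : ℝ} (hs : s ∈ Icc 0 (Γ.len j))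
    (hv : Γ.σ j s ∉ Γ.vertexSet) (v : ℝ) : Λ.lagOf (Γ.σ j s) v = Λ.L j s v := by
  have hspec := (Γ.cover (Γ.σ j s)).choose_spec.choose_spec
  obtain ⟨h1, h2⟩ := MetricGraph.coord_unique hs hspec.1 hv hspec.2.symm
  exact (congrArg₂ (fun a b => Λ.L a b v) h1 h2).symm

lemma lagOf_zero (Λ : TonelliLagrangian Γ) {j : Γ.E} {s : ℝ} (hs : s ∈ Icc 0 (Γ.len j)) :
    Λ.lagOf (Γ.σ j s) 0 = Λ.L j s 0 := by
  have hspec := (Γ.cover (Γ.σ j s)).choose_spec.choose_spec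
  exact Λ.vertex_consistent _ _ _ hspec.1 _ hs hspec.2

/-! ### Curves of finite action and the function `h_t` -/

/-- The curves competing in the definition of `h_t(x,y)`: absolutely continuous on `[0,t]`,
from `x` to `y`, of finite action. -/
def IsCurve (Λ : TonelliLagrangian Γ) (t : ℝ) (x y : Γ.G) (γ : ℝ → Γ.G) : Prop :=
  Γ.AbsContOn 0 t γ ∧ γ 0 = x ∧ γ t = y ∧ Λ.ActionIntegrableOn 0 t γ

lemma ActionIntegrableOn.intervalIntegrable {Λ : TonelliLagrangian Γ} {a b : ℝ} {γ : ℝ → Γ.G}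
    (h : Λ.ActionIntegrableOn a b γ) (hab : a ≤ b) :
    IntervalIntegrable (fun t => Λ.lagOf (γ t) (Γ.gderiv γ t)) volume a b :=
  (intervalIntegrable_iff_integrableOn_Icc_of_le hab).2 h

lemma le_action {Λ : TonelliLagrangian Γ} {D : ℝ} (hD : ∀ x v, D ≤ Λ.lagOf x v) {a b : ℝ}
    (hab : a ≤ b) {γ : ℝ → Γ.G} (h : Λ.ActionIntegrableOn a b γ) :
    D * (b - a) ≤ Λ.action a b γ := by
  have := intervalIntegral.integral_mono_on hab intervalIntegrable_const
    (h.intervalIntegrable hab) fun t _ => hD (γ t) (Γ.gderiv γ t)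
  rw [intervalIntegral.integral_const, smul_eq_mul, mul_comm] at this
  exact this

lemma ht_le (Λ : TonelliLagrangian Γ) {t : ℝ} (ht : 0 < t) {x y : Γ.G} {γ : ℝ → Γ.G}
    (h : Λ.IsCurve t x y γ) : Λ.ht t x y ≤ Λ.action 0 t γ := by
  obtain ⟨D, hD⟩ := Λ.exists_lagOf_lower
  refine csInf_le ⟨D * (t - 0), ?_⟩ ⟨γ, h.1, h.2.1, h.2.2.1, h.2.2.2, rfl⟩
  rintro r ⟨η, -, -, -, hη, rfl⟩
  exact le_action hD ht.le hη

lemma exists_curve_lt (Λ : TonelliLagrangian Γ) {t : ℝ} {x y : Γ.G}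
    (hne : ∃ γ, Λ.IsCurve t x y γ) {r : ℝ} (hr : Λ.ht t x y < r) :
    ∃ γ, Λ.IsCurve t x y γ ∧ Λ.action 0 t γ < r := by
  obtain ⟨γ, h1, h2, h3, h4⟩ := hne
  unfold ht at hr
  obtain ⟨_, ⟨η, k1, k2, k3, k4, rfl⟩, hlt⟩ :=
    exists_lt_of_csInf_lt (by exact ⟨_, ⟨γ, h1, h2, h3, h4, rfl⟩⟩) hr
  exact ⟨η, ⟨k1, k2, k3, k4⟩, hlt⟩

/-- A piece `[a,b]` of a curve, translated to start at time `0`. -/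
lemma isCurve_piece {Λ : TonelliLagrangian Γ} {a b : ℝ} {γ : ℝ → Γ.G}
    (hac : Γ.AbsContOn a b γ) (hint : Λ.ActionIntegrableOn a b γ) :
    Λ.IsCurve (b - a) (γ a) (γ b) (fun s => γ (s + a)) ∧
      Λ.action 0 (b - a) (fun s => γ (s + a)) = Λ.action a b γ := by
  refine ⟨⟨MetricGraph.AbsContOn.shift a (by simpa using hac), by simp, by simp, ?_⟩, ?_⟩
  · unfold ActionIntegrableOn at hint ⊢
    simp only [MetricGraph.gderiv_shift]
    have h := (measurePreserving_add_right (volume : Measure ℝ) a).integrableOn_comp_preimage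
      (Homeomorph.addRight a).measurableEmbedding
      (f := fun t => Λ.lagOf (γ t) (Γ.gderiv γ t)) (s := Icc a b)
    have h' := h.2 hint
    simpa [Function.comp_def] using h'
  · unfold action
    simp only [MetricGraph.gderiv_shift]
    rw [intervalIntegral.integral_comp_add_right (fun t => Λ.lagOf (γ t) (Γ.gderiv γ t))]
    simp

lemma ht_le_piece (Λ : TonelliLagrangian Γ) {a b : ℝ} (hab : a < b) {γ : ℝ → Γ.G}
    (hac : Γ.AbsContOn a b γ) (hint : Λ.ActionIntegrableOn a b γ) :
    Λ.ht (b - a) (γ a) (γ b) ≤ Λ.action a b γ := by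
  obtain ⟨h1, h2⟩ := isCurve_piece hac hint
  exact (Λ.ht_le (sub_pos.2 hab) h1).trans_eq h2

lemma IsCurve.trans {Λ : TonelliLagrangian Γ} {s t : ℝ} (hs : 0 < s) (ht : 0 < t) {x y z : Γ.G}
    {γ η : ℝ → Γ.G} (hγ : Λ.IsCurve s x y γ) (hη : Λ.IsCurve t y z η) :
    ∃ ζ, Λ.IsCurve (s + t) x z ζ ∧
      Λ.action 0 (s + t) ζ = Λ.action 0 s γ + Λ.action 0 t η := by
  obtain ⟨ga, g0, g1, gi⟩ := hγ
  obtain ⟨ea, e0, e1, ei⟩ := hη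
  -- glue `γ` on `[0,s]` with the translate of `η` on `[s,s+t]`
  let η' : ℝ → Γ.G := fun r => η (r + -s)
  let ζ : ℝ → Γ.G := fun r => if r ≤ s then γ r else η' r
  have hη' : Γ.AbsContOn s (s + t) η' := MetricGraph.AbsContOn.shift (-s) (by simpa using ea)
  have hζ1 : ∀ r ∈ Icc 0 s, γ r = ζ r := fun r hr => by simp [ζ, hr.2]
  have hζ2 : ∀ r ∈ Icc s (s + t), η' r = ζ r := by
    intro r hr
    rcases hr.1.eq_or_lt with h | h
    · subst h; simp [ζ, η', e0, g1]
    · simp [ζ, not_le.2 h]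
  have hac : Γ.AbsContOn 0 (s + t) ζ :=
    (ga.congr hζ1).concat hs.le (by linarith) (hη'.congr hζ2)
  set F : ℝ → ℝ := fun r => Λ.lagOf (ζ r) (Γ.gderiv ζ r) with hF
  have F1 : ∀ r ∈ Ioo 0 s, Λ.lagOf (γ r) (Γ.gderiv γ r) = F r := by
    intro r hr
    have : γ =ᶠ[𝓝 r] ζ := by
      filter_upwards [Ioo_mem_nhds hr.1 hr.2] with q hq
      exact hζ1 q (Ioo_subset_Icc_self hq)
    rw [hF, MetricGraph.gderiv_congr this, this.self_of_nhds]
  have F2 : ∀ r ∈ Ioo s (s + t), Λ.lagOf (η (r + -s)) (Γ.gderiv η (r + -s)) = F r := by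
    intro r hr
    have : η' =ᶠ[𝓝 r] ζ := by
      filter_upwards [Ioo_mem_nhds hr.1 hr.2] with q hq
      exact hζ2 q (Ioo_subset_Icc_self hq)
    rw [← MetricGraph.gderiv_shift, hF]
    change Λ.lagOf (η' r) (Γ.gderiv η' r) = _
    rw [MetricGraph.gderiv_congr this, this.self_of_nhds]
  have hi1 : IntervalIntegrable F volume 0 s := by
    rw [intervalIntegrable_iff_integrableOn_Ioo_of_le hs.le]
    exact (gi.mono_set Ioo_subset_Icc_self).congr_fun F1 measurableSet_Ioo
  have hi2' : IntervalIntegrable (fun r => Λ.lagOf (η (r + -s)) (Γ.gderiv η (r + -s)))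
      volume s (s + t) := by
    have := (ei.intervalIntegrable ht.le).comp_add_right (-s)
    simpa [add_comm] using this
  have hi2 : IntervalIntegrable F volume s (s + t) := by
    rw [intervalIntegrable_iff_integrableOn_Ioo_of_le (by linarith)] at hi2' ⊢
    exact hi2'.congr_fun F2 measurableSet_Ioo
  refine ⟨ζ, ⟨hac, ?_, ?_, ?_⟩, ?_⟩
  · rw [← hζ1 0 ⟨le_rfl, hs.le⟩, g0]
  · rw [← hζ2 (s + t) ⟨by linarith, le_rfl⟩]; simp [η', e1]
  · exact (intervalIntegrable_iff_integrableOn_Icc_of_le (by linarith)).1 (hi1.trans hi2)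
  · unfold action
    rw [← intervalIntegral.integral_add_adjacent_intervals hi1 hi2]
    congr 1
    · rw [intervalIntegral.integral_of_le hs.le, intervalIntegral.integral_of_le hs.le,
        integral_Ioc_eq_integral_Ioo, integral_Ioc_eq_integral_Ioo]
      exact (setIntegral_congr_fun measurableSet_Ioo F1).symm
    · have h := intervalIntegral.integral_comp_add_right (a := s) (b := s + t)
        (fun r => Λ.lagOf (η r) (Γ.gderiv η r)) (-s)
      simp only [add_neg_cancel, add_neg_cancel_comm] at h
      rw [← h, intervalIntegral.integral_of_le (by linarith),
        intervalIntegral.integral_of_le (by linarith),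
        integral_Ioc_eq_integral_Ioo, integral_Ioc_eq_integral_Ioo]
      exact (setIntegral_congr_fun measurableSet_Ioo F2).symm

/-- Motion at constant speed along an edge. At a vertex met with nonzero speed the edgewise
derivative does not exist, but this happens at finitely many times only. -/
lemma exists_segment (Λ : TonelliLagrangian Γ) {j : Γ.E} {s r τ : ℝ} (hs : s ∈ Icc 0 (Γ.len j))
    (hr : r ∈ Icc 0 (Γ.len j)) (hτ : 0 < τ) :
    ∃ γ, Λ.IsCurve τ (Γ.σ j s) (Γ.σ j r) γ ∧ ∀ M,
      (∀ p ∈ Icc 0 (Γ.len j), Λ.L j p ((r - s) / τ) ≤ M) → Λ.action 0 τ γ ≤ M * τ := by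
  set v : ℝ := (r - s) / τ with hv
  have hvτ : v * τ = r - s := div_mul_cancel₀ _ hτ.ne'
  have hmem : ∀ t ∈ Icc 0 τ, s + v * t ∈ Icc 0 (Γ.len j) := by
    intro t ht
    have h1 : s + v * t = (1 - t / τ) * s + (t / τ) * r := by rw [hv]; field_simp; ring
    have h2 : 0 ≤ t / τ := div_nonneg ht.1 hτ.le
    have h3 : t / τ ≤ 1 := (div_le_one hτ).2 ht.2
    rw [h1]
    exact (convex_Icc 0 (Γ.len j)) hs hr (by linarith) h2 (by ring)
  let γ : ℝ → Γ.G := fun t => Γ.σ j (s + v * t)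
  have hac : Γ.AbsContOn 0 τ γ := by
    refine MetricGraph.absContOn_of_lipschitz (K := |v|) fun a ha b hb => ?_
    refine (Γ.σ_lip j _ (hmem a ha) _ (hmem b hb)).trans_eq ?_
    rw [← abs_mul]; congr 1; ring
  have hae : ∀ᵐ t ∂(volume.restrict (Ioo 0 τ)),
      Λ.L j (s + v * t) v = Λ.lagOf (γ t) (Γ.gderiv γ t) := by
    rcases eq_or_ne v 0 with h0 | h0
    · refine Eventually.of_forall fun t => ?_
      have hc : γ = fun _ => Γ.σ j s := by funext q; simp [γ, h0]
      have hd : Γ.HasGDerivAt γ t 0 := by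
        rw [hc]
        by_cases hx : Γ.σ j s ∈ Γ.vertexSet
        · exact Or.inl ⟨hx, rfl, fun ε hε => ⟨1, one_pos, fun q _ => by
            simp only [dist_self]; positivity⟩⟩
        · exact Or.inr ⟨hx, j, fun _ => s, Eventually.of_forall fun _ => rfl,
            Eventually.of_forall fun _ => hs, hasDerivAt_const t s⟩
      rw [hd.gderiv_eq, hc, Λ.lagOf_zero hs, h0, zero_mul, add_zero]
    · have hfin : (Ioo 0 τ ∩ γ ⁻¹' Γ.vertexSet).Finite := by
        refine Set.Finite.of_finite_image (f := γ) (Γ.vertexSet_finite.subset ?_) ?_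
        · rintro _ ⟨t, ht, rfl⟩; exact ht.2
        · intro a ha b hb hab
          have := Γ.σ_inj j (hmem a (Ioo_subset_Icc_self ha.1)) (hmem b (Ioo_subset_Icc_self hb.1))
            hab
          exact mul_left_cancel₀ h0 (add_left_cancel this)
      rw [ae_restrict_iff' measurableSet_Ioo]
      filter_upwards [compl_mem_ae_iff.2 (hfin.measure_zero volume)] with t ht htm
      have hx : γ t ∉ Γ.vertexSet := fun hx => ht ⟨htm, hx⟩
      have hd : Γ.HasGDerivAt γ t v := by
        refine Or.inr ⟨hx, j, fun q => s + v * q, Eventually.of_forall fun _ => rfl, ?_, ?_⟩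
        · filter_upwards [Ioo_mem_nhds htm.1 htm.2] with q hq
          exact hmem q (Ioo_subset_Icc_self hq)
        · simpa using ((hasDerivAt_id t).const_mul v).const_add s
      rw [hd.gderiv_eq]
      exact (Λ.lagOf_of_not_vertex (hmem t (Ioo_subset_Icc_self htm)) hx v).symm
  have hcont : ContinuousOn (fun t => Λ.L j (s + v * t) v) (Icc 0 τ) :=
    (Λ.L_continuousOn_left j v).comp (f := fun t : ℝ => s + v * t) (by fun_prop) hmem
  have hi : IntervalIntegrable (fun t => Λ.L j (s + v * t) v) volume 0 τ :=
    ContinuousOn.intervalIntegrable (by rwa [uIcc_of_le hτ.le])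
  refine ⟨γ, ⟨hac, by simp [γ], by simp [γ, hvτ], ?_⟩, fun M hM => ?_⟩
  · rw [intervalIntegrable_iff_integrableOn_Ioo_of_le hτ.le] at hi
    exact (integrableOn_Icc_iff_integrableOn_Ioo).2 (Integrable.congr hi hae)
  · have heq : Λ.action 0 τ γ = ∫ t in 0..τ, Λ.L j (s + v * t) v := by
      unfold action
      rw [intervalIntegral.integral_of_le hτ.le, intervalIntegral.integral_of_le hτ.le,
        integral_Ioc_eq_integral_Ioo, integral_Ioc_eq_integral_Ioo]
      exact (integral_congr_ae hae).symm
    rw [heq]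
    have := intervalIntegral.integral_mono_on hτ.le hi
      (intervalIntegrable_const (c := M)) fun t ht => hM _ (hmem t ht)
    rw [intervalIntegral.integral_const, smul_eq_mul, sub_zero, mul_comm] at this
    exact this

/-- Any two points are joined by a curve of finite action in any positive time: the set of
points reachable from `x` is open and closed. -/
lemma exists_curve (Λ : TonelliLagrangian Γ) (x y : Γ.G) {t : ℝ} (ht : 0 < t) :
    ∃ γ, Λ.IsCurve t x y γ := by
  let S : Set Γ.G := {y | ∀ t : ℝ, 0 < t → ∃ γ, Λ.IsCurve t x y γ}
  have step : ∀ p q : Γ.G, p ∈ S →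
      (∃ j, ∃ s ∈ Icc 0 (Γ.len j), ∃ r ∈ Icc 0 (Γ.len j), Γ.σ j s = p ∧ Γ.σ j r = q) → q ∈ S := by
    rintro p q hp ⟨j, s, hs, r, hr, rfl, rfl⟩ t ht
    obtain ⟨γ, hγ⟩ := hp (t / 2) (half_pos ht)
    obtain ⟨η, hη, -⟩ := Λ.exists_segment hs hr (half_pos ht)
    obtain ⟨ζ, hζ, -⟩ := hγ.trans (half_pos ht) (half_pos ht) hη
    exact ⟨ζ, by simpa using hζ⟩
  have hopen : IsOpen S := by
    refine isOpen_iff_mem_nhds.2 fun p hp => ?_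
    filter_upwards [Γ.eventually_same_edge p one_pos] with q hq
    obtain ⟨j, s, hs, r, hr, h1, h2, -⟩ := hq
    exact step p q hp ⟨j, s, hs, r, hr, h1, h2⟩
  have hclosed : IsClosed S := by
    refine ⟨isOpen_iff_mem_nhds.2 fun p hp => ?_⟩
    filter_upwards [Γ.eventually_same_edge p one_pos] with q hq hqS
    obtain ⟨j, s, hs, r, hr, h1, h2, -⟩ := hq
    exact hp (step q p hqS ⟨j, r, hr, s, hs, h2, h1⟩)
  have hne : x ∈ S := by
    intro t ht
    obtain ⟨j, s, hs, rfl⟩ := Γ.cover x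
    obtain ⟨η, hη, -⟩ := Λ.exists_segment hs hs ht
    exact ⟨η, hη⟩
  have : S = univ := IsClopen.eq_univ ⟨hclosed, hopen⟩ ⟨x, hne⟩
  exact (this ▸ mem_univ y : y ∈ S) t ht

lemma ht_triangle (Λ : TonelliLagrangian Γ) {s t : ℝ} (hs : 0 < s) (ht : 0 < t) (x y z : Γ.G) :
    Λ.ht (s + t) x z ≤ Λ.ht s x y + Λ.ht t y z := by
  refine le_of_forall_pos_le_add fun ε hε => ?_
  obtain ⟨γ, hγ, h1⟩ := Λ.exists_curve_lt (Λ.exists_curve x y hs)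
    (lt_add_of_pos_right (Λ.ht s x y) (half_pos hε))
  obtain ⟨η, hη, h2⟩ := Λ.exists_curve_lt (Λ.exists_curve y z ht)
    (lt_add_of_pos_right (Λ.ht t y z) (half_pos hε))
  obtain ⟨ζ, hζ, h3⟩ := hγ.trans hs ht hη
  have := Λ.ht_le (add_pos hs ht) hζ
  linarith

/-- Nearby points are joined, in both directions, at a cost at most `M τ` in time `τ`. -/
lemma exists_local_cost (Λ : TonelliLagrangian Γ) : ∃ M : ℝ, ∀ q : Γ.G, ∀ τ : ℝ, 0 < τ →
    ∀ᶠ p in 𝓝 q, Λ.ht τ q p ≤ M * τ ∧ Λ.ht τ p q ≤ M * τ := by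
  obtain ⟨M, hM⟩ := Λ.exists_abs_bound 1
  refine ⟨M, fun q τ hτ => ?_⟩
  have seg : ∀ j, ∀ s ∈ Icc 0 (Γ.len j), ∀ r ∈ Icc 0 (Γ.len j), |r - s| < τ →
      Λ.ht τ (Γ.σ j s) (Γ.σ j r) ≤ M * τ := by
    intro j s hs r hr hlt
    obtain ⟨γ, hγ, hA⟩ := Λ.exists_segment hs hr hτ
    refine (Λ.ht_le hτ hγ).trans (hA M fun p hp => (le_abs_self _).trans (hM j p hp _ ?_))
    rw [abs_div, abs_of_pos hτ, div_le_one hτ]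
    exact hlt.le
  filter_upwards [Γ.eventually_same_edge q hτ] with p hp
  obtain ⟨j, s, hs, r, hr, rfl, rfl, hlt⟩ := hp
  exact ⟨seg j s hs r hr hlt, seg j r hr s hs (by rwa [abs_sub_comm])⟩

end TonelliLagrangian

/-! ### The Peierls barrier -/

namespace TonelliLagrangian

variable {Γ : MetricGraph} {Λ : TonelliLagrangian Γ} {c : ℝ}

lemma IsCriticalValue.liminf_eq (hc : Λ.IsCriticalValue c) (x y : Γ.G) :
    liminf (fun t : ℝ => ((Λ.ht t x y + c * t : ℝ) : EReal)) atTop = (Λ.peierls c x y : EReal) := by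
  obtain ⟨r, hr⟩ := hc.2.2 x y
  unfold peierls
  rw [hr, EReal.toReal_coe]

lemma IsCriticalValue.peierls_le (hc : Λ.IsCriticalValue c) {x y : Γ.G} {e : ℝ}
    (h : ∀ T : ℝ, ∃ t, T ≤ t ∧ Λ.ht t x y + c * t ≤ e) : Λ.peierls c x y ≤ e := by
  rw [← EReal.coe_le_coe_iff, ← hc.liminf_eq]
  refine liminf_le_of_frequently_le' (frequently_atTop.2 fun T => ?_)
  obtain ⟨t, hT, ht⟩ := h T
  exact ⟨t, hT, EReal.coe_le_coe_iff.2 ht⟩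

lemma IsCriticalValue.le_peierls (hc : Λ.IsCriticalValue c) {x y : Γ.G} {e : ℝ}
    (h : ∀ t : ℝ, 0 < t → e ≤ Λ.ht t x y + c * t) : e ≤ Λ.peierls c x y := by
  rw [← EReal.coe_le_coe_iff, ← hc.liminf_eq]
  refine le_liminf_of_le (h := ?_)
  filter_upwards [eventually_gt_atTop 0] with t ht
  exact EReal.coe_le_coe_iff.2 (h t ht)

lemma ht_iterate (Λ : TonelliLagrangian Γ) {t : ℝ} (ht : 0 < t) (x : Γ.G) (n : ℕ) :
    Λ.ht ((n + 1) * t) x x ≤ (n + 1) * Λ.ht t x x := by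
  induction n with
  | zero => simp
  | succ n ih =>
    have h := Λ.ht_triangle (s := (n + 1) * t) (t := t) (by positivity) ht x x x
    push_cast
    rw [show ((n : ℝ) + 1 + 1) * t = (n + 1) * t + t by ring]
    linarith

/-- Closed loops have nonnegative critical action: otherwise iterating a loop would make the
Peierls barrier `-∞`. -/
lemma IsCriticalValue.loop_nonneg (hc : Λ.IsCriticalValue c) (x : Γ.G) {t : ℝ} (ht : 0 < t) :
    0 ≤ Λ.ht t x x + c * t := by
  by_contra hneg
  push Not at hneg
  have h : Λ.peierls c x x ≤ Λ.peierls c x x - 1 := by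
    refine hc.peierls_le fun T => ?_
    have h1 : Tendsto (fun n : ℕ => ((n : ℝ) + 1) * t) atTop atTop :=
      (tendsto_natCast_atTop_atTop.atTop_add tendsto_const_nhds).atTop_mul_const ht
    have h2 : Tendsto (fun n : ℕ => ((n : ℝ) + 1) * (Λ.ht t x x + c * t)) atTop atBot :=
      (tendsto_natCast_atTop_atTop.atTop_add tendsto_const_nhds).atTop_mul_const_of_neg hneg
    obtain ⟨n, hn1, hn2⟩ := ((h1.eventually_ge_atTop T).and
      (h2.eventually_le_atBot (Λ.peierls c x x - 1))).exists
    refine ⟨_, hn1, le_trans ?_ hn2⟩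
    have := Λ.ht_iterate ht x n
    linarith
  linarith

/-- Upper bound for the barrier along curves with moving endpoints: the endpoints can be
corrected at a small cost in a small time. -/
lemma IsCriticalValue.peierls_le_of_tendsto (hc : Λ.IsCriticalValue c) {a b : ℕ → Γ.G}
    {p q : Γ.G} {t e : ℕ → ℝ} {e₀ : ℝ} (ha : Tendsto a atTop (𝓝 p)) (hb : Tendsto b atTop (𝓝 q))
    (ht : Tendsto t atTop atTop) (he : Tendsto e atTop (𝓝 e₀))
    (h : ∀ᶠ n in atTop, Λ.ht (t n) (a n) (b n) + c * t n ≤ e n) : Λ.peierls c p q ≤ e₀ := by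
  obtain ⟨M, hM⟩ := Λ.exists_local_cost
  have key : ∀ τ : ℝ, 0 < τ → Λ.peierls c p q ≤ e₀ + τ + 2 * (M + c) * τ := by
    intro τ hτ
    refine hc.peierls_le fun T => ?_
    obtain ⟨n, h1, h2, h3, h4, h5, h6⟩ := ((ha.eventually (hM p τ hτ)).and
      ((hb.eventually (hM q τ hτ)).and ((ht.eventually_ge_atTop T).and
      ((ht.eventually_gt_atTop 0).and ((he.eventually_le_const (lt_add_of_pos_right e₀ hτ)).and
      h))))).exists
    refine ⟨τ + t n + τ, by linarith, ?_⟩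
    have t1 := Λ.ht_triangle (add_pos hτ h4) hτ p (b n) q
    have t2 := Λ.ht_triangle hτ h4 p (a n) (b n)
    linarith [h1.1, h2.2]
  have hlim : Tendsto (fun τ : ℝ => e₀ + τ + 2 * (M + c) * τ) (𝓝[>] 0) (𝓝 e₀) := by
    have : Continuous fun τ : ℝ => e₀ + τ + 2 * (M + c) * τ := by fun_prop
    simpa using (this.tendsto 0).mono_left nhdsWithin_le_nhds
  exact ge_of_tendsto hlim (eventually_mem_nhdsWithin.mono fun τ hτ => key τ hτ)

lemma exists_uniform_bound (Λ : TonelliLagrangian Γ) (x : Γ.G) :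
    ∃ B : ℝ, ∀ p, Λ.ht 2 p x ≤ B ∧ Λ.ht 2 x p ≤ B := by
  obtain ⟨M, hM⟩ := Λ.exists_local_cost
  have h := (isCompact_univ (X := Γ.G)).induction_on
    (p := fun S => ∃ B : ℝ, ∀ p ∈ S, Λ.ht 2 p x ≤ B ∧ Λ.ht 2 x p ≤ B) ⟨0, by simp⟩ ?_ ?_ ?_
  · obtain ⟨B, hB⟩ := h
    exact ⟨B, fun p => hB p (mem_univ p)⟩
  · rintro S T hST ⟨B, hB⟩
    exact ⟨B, fun p hp => hB p (hST hp)⟩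
  · rintro S T ⟨B, hB⟩ ⟨B', hB'⟩
    refine ⟨max B B', ?_⟩
    rintro p (hp | hp)
    · exact ⟨(hB p hp).1.trans (le_max_left _ _), (hB p hp).2.trans (le_max_left _ _)⟩
    · exact ⟨(hB' p hp).1.trans (le_max_right _ _), (hB' p hp).2.trans (le_max_right _ _)⟩
  · intro y _
    refine ⟨_, mem_nhdsWithin_of_mem_nhds (hM y 1 one_pos),
      M * 1 + max (Λ.ht 1 y x) (Λ.ht 1 x y), fun p hp => ?_⟩
    have h1 := Λ.ht_triangle one_pos one_pos p y x
    have h2 := Λ.ht_triangle one_pos one_pos x y p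
    rw [one_add_one_eq_two] at h1 h2
    have := le_max_left (Λ.ht 1 y x) (Λ.ht 1 x y)
    have := le_max_right (Λ.ht 1 y x) (Λ.ht 1 x y)
    exact ⟨by linarith [hp.2], by linarith [hp.1]⟩

/-! ### Existence of a point of the Aubry set -/

/-- Almost closed pieces of curve, of length at least `τ` and critical action at most `δ`. Along
a long loop of bounded critical action, the pairs (position, critical action so far) at the times
`τ, 2τ, …` stay in a compact set, so two of them are close. -/
lemma IsCriticalValue.exists_almost_loop (hc : Λ.IsCriticalValue c) {τ δ : ℝ} (hτ : 0 < τ)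
    (hδ : 0 < δ) : ∃ a b : Γ.G, ∃ t : ℝ, τ ≤ t ∧ dist a b < δ ∧ Λ.ht t a b + c * t ≤ δ := by
  obtain ⟨j₀⟩ := Γ.neE
  set x : Γ.G := Γ.σ j₀ 0
  obtain ⟨B, hB⟩ := Λ.exists_uniform_bound x
  set C : ℝ := Λ.peierls c x x + 1 with hC
  -- the compact set in which the pairs (position, critical action) lie
  have hK : IsCompact ((univ : Set Γ.G) ×ˢ Icc (-(B + 2 * c)) (C + (B + 2 * c))) :=
    isCompact_univ.prod isCompact_Icc
  obtain ⟨S, -, hSf, hScov⟩ := hK.finite_cover_balls (half_pos hδ)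
  set N : ℕ := hSf.toFinset.card with hN
  obtain ⟨T, hT, hlt⟩ : ∃ T : ℝ, (N + 2) * τ ≤ T ∧ Λ.ht T x x + c * T < C := by
    have hfr : ∃ᶠ t in (atTop : Filter ℝ), ((Λ.ht t x x + c * t : ℝ) : EReal) < (C : EReal) := by
      refine frequently_lt_of_liminf_lt (h := ?_)
      rw [hc.liminf_eq, EReal.coe_lt_coe_iff]
      linarith
    obtain ⟨T, hT, hlt⟩ := frequently_atTop.1 hfr ((N + 2) * τ)
    exact ⟨T, hT, EReal.coe_lt_coe_iff.1 hlt⟩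
  have hTpos : 0 < T := lt_of_lt_of_le (by positivity) hT
  obtain ⟨γ, ⟨hac, h0, h1, hint⟩, hact⟩ := Λ.exists_curve_lt (Λ.exists_curve x x hTpos)
    (show Λ.ht T x x < C - c * T by linarith)
  have hsub : ∀ a b, 0 ≤ a → b ≤ T → Λ.ActionIntegrableOn a b γ := fun a b ha hb =>
    hint.mono_set (Icc_subset_Icc ha hb)
  -- the critical action spent up to time `s`
  set F : ℝ → ℝ := fun s => Λ.action 0 s γ + c * s with hF
  have hpiece : ∀ a b, 0 ≤ a → a < b → b ≤ T →
      Λ.ht (b - a) (γ a) (γ b) + c * (b - a) ≤ F b - F a := by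
    intro a b ha hab hb
    have e1 := Λ.ht_le_piece hab (hac.mono ha hb) (hsub a b ha hb)
    have e2 : Λ.action 0 a γ + Λ.action a b γ = Λ.action 0 b γ :=
      intervalIntegral.integral_add_adjacent_intervals
        ((hsub 0 a le_rfl (by linarith)).intervalIntegrable ha)
        ((hsub a b ha hb).intervalIntegrable hab.le)
    simp only [hF]
    linarith
  have hF0 : F 0 = 0 := by simp [hF, action]
  have hFb : ∀ s, 0 < s → s < T → F s ∈ Icc (-(B + 2 * c)) (C + (B + 2 * c)) := by
    intro s hs hsT
    have e1 := hpiece 0 s le_rfl hs hsT.le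
    have e2 := hpiece s T hs.le hsT le_rfl
    rw [hF0, h0, sub_zero, sub_zero] at e1
    rw [h1] at e2
    have l1 := hc.loop_nonneg x (add_pos hs two_pos)
    have l2 := hc.loop_nonneg x (add_pos two_pos (sub_pos.2 hsT))
    have k1 := Λ.ht_triangle hs two_pos x (γ s) x
    have k2 := Λ.ht_triangle two_pos (sub_pos.2 hsT) x (γ s) x
    have b := hB (γ s)
    have hFT : F T < C := by simp only [hF]; linarith
    constructor <;> linarith [b.1, b.2]
  have htime : ∀ i ∈ Finset.range (N + 1), 0 < ((i : ℝ) + 1) * τ ∧ ((i : ℝ) + 1) * τ < T := by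
    intro i hi
    have hi' : (i : ℝ) < N + 1 := by exact_mod_cast Finset.mem_range.1 hi
    exact ⟨by positivity, lt_of_lt_of_le (mul_lt_mul_of_pos_right (by linarith) hτ) hT⟩
  have hnear : ∀ i : ℕ, ∃ z, i ∈ Finset.range (N + 1) →
      z ∈ S ∧ dist (γ (((i : ℝ) + 1) * τ), F (((i : ℝ) + 1) * τ)) z < δ / 2 := by
    intro i
    by_cases hi : i ∈ Finset.range (N + 1)
    · have := hScov (mk_mem_prod (mem_univ (γ (((i : ℝ) + 1) * τ)))
        (hFb _ (htime i hi).1 (htime i hi).2))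
      obtain ⟨z, hz, hd⟩ := mem_iUnion₂.1 this
      exact ⟨z, fun _ => ⟨hz, hd⟩⟩
    · exact ⟨(x, 0), fun h => absurd h hi⟩
  choose z hz using hnear
  obtain ⟨i, hi, k, hk, hik, heq⟩ := Finset.exists_ne_map_eq_of_card_lt_of_maps_to
    (s := Finset.range (N + 1)) (t := hSf.toFinset) (by simp [hN]) (f := z)
    (fun i hi => by simpa using (hz i (by simpa using hi)).1)
  have main : ∀ i ∈ Finset.range (N + 1), ∀ k ∈ Finset.range (N + 1), i < k → z i = z k →
      ∃ a b : Γ.G, ∃ t : ℝ, τ ≤ t ∧ dist a b < δ ∧ Λ.ht t a b + c * t ≤ δ := by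
    intro i hi k hk hik heq
    have hd := dist_triangle_right (γ (((i : ℝ) + 1) * τ), F (((i : ℝ) + 1) * τ))
      (γ (((k : ℝ) + 1) * τ), F (((k : ℝ) + 1) * τ)) (z i)
    have hd1 := (hz i hi).2
    have hd2 := (hz k hk).2
    rw [← heq] at hd2
    have hd' := lt_of_le_of_lt hd (add_lt_add hd1 hd2)
    rw [add_halves, Prod.dist_eq, max_lt_iff] at hd'
    have hik' : (i : ℝ) + 1 ≤ k := by exact_mod_cast hik
    have hτ' : ((i : ℝ) + 1) * τ + τ ≤ ((k : ℝ) + 1) * τ := by nlinarith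
    refine ⟨_, _, _, by linarith, hd'.1, (hpiece _ _ (htime i hi).1.le (by linarith)
      (htime k hk).2.le).trans ?_⟩
    have := (abs_lt.1 (Real.dist_eq _ _ ▸ hd'.2)).1
    linarith
  rcases lt_or_gt_of_ne hik with h | h
  · exact main i hi k hk h heq
  · exact main k hk i hi h heq.symm

lemma IsCriticalValue.mem_aubrySet (hc : Λ.IsCriticalValue c) {q : Γ.G}
    (h : Λ.peierls c q q ≤ 0) : q ∈ Λ.aubrySet c :=
  le_antisymm h (hc.le_peierls fun _ ht => hc.loop_nonneg q ht)

lemma IsCriticalValue.aubrySet_nonempty (hc : Λ.IsCriticalValue c) :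
    (Λ.aubrySet c).Nonempty := by
  have H : ∀ n : ℕ, ∃ a b : Γ.G, ∃ t : ℝ, (n : ℝ) + 1 ≤ t ∧ dist a b < 1 / ((n : ℝ) + 1) ∧
      Λ.ht t a b + c * t ≤ 1 / ((n : ℝ) + 1) := fun n =>
    hc.exists_almost_loop (by positivity) (by positivity)
  choose a b t ht hd he using H
  obtain ⟨q, φ, hφ, hq⟩ := CompactSpace.tendsto_subseq a
  have hz : Tendsto (fun n => 1 / ((φ n : ℝ) + 1)) atTop (𝓝 0) :=
    (tendsto_one_div_add_atTop_nhds_zero_nat (𝕜 := ℝ)).comp hφ.tendsto_atTop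
  have hab : Tendsto (fun n => dist (a (φ n)) (b (φ n))) atTop (𝓝 0) :=
    squeeze_zero (fun _ => dist_nonneg) (fun n => (hd (φ n)).le) hz
  have hb : Tendsto (fun n => b (φ n)) atTop (𝓝 q) := (tendsto_iff_of_dist hab).1 hq
  have htt : Tendsto (fun n => t (φ n)) atTop atTop :=
    tendsto_atTop_mono (fun n => (le_add_of_nonneg_right zero_le_one).trans (ht (φ n)))
      (tendsto_natCast_atTop_atTop.comp hφ.tendsto_atTop)
  exact ⟨q, hc.mem_aubrySet
    (hc.peierls_le_of_tendsto hq hb htt hz (Eventually.of_forall fun n => he (φ n)))⟩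

/-! ### The representation formula -/

lemma IsCriticalValue.le_add_peierls (hc : Λ.IsCriticalValue c) {u : Γ.G → ℝ}
    (hu : Λ.Dominated c u) (q x : Γ.G) : u x ≤ u q + Λ.peierls c q x := by
  have := hc.le_peierls (x := q) (y := x) (e := u x - u q) fun t ht => hu q x t ht
  linarith

/-- The minimum is attained at any limit point, as `t → -∞`, of a calibrated curve ending at
`x`. -/
lemma IsCriticalValue.exists_eq_add_peierls (hc : Λ.IsCriticalValue c) {u : Γ.G → ℝ}
    (hu : Λ.BackwardWeakKAM c u) (x : Γ.G) :
    ∃ q ∈ Λ.aubrySet c, u x = u q + Λ.peierls c q x := by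
  obtain ⟨hcont, hdom, hcal⟩ := hu
  obtain ⟨γ, h0, hac, hγ⟩ := hcal x
  obtain ⟨q, φ, hφ, hq⟩ := CompactSpace.tendsto_subseq (fun n : ℕ => γ (-(n : ℝ)))
  set p : ℕ → Γ.G := fun n => γ (-(φ n : ℝ)) with hp
  have hq : Tendsto p atTop (𝓝 q) := hq
  have huq : Tendsto (fun n => u (p n)) atTop (𝓝 (u q)) := (hcont.tendsto q).comp hq
  have hpiece : ∀ a b : ℝ, a < b → b ≤ 0 →
      Λ.ht (b - a) (γ a) (γ b) + c * (b - a) ≤ u (γ b) - u (γ a) := by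
    intro a b hab hb
    obtain ⟨hi, he⟩ := hγ a (hab.le.trans hb) b hb hab.le
    have := Λ.ht_le_piece hab ((hac a (hab.le.trans hb)).mono le_rfl hb) hi
    linarith
  have hφt : Tendsto (fun n => (φ n : ℝ)) atTop atTop :=
    tendsto_natCast_atTop_atTop.comp hφ.tendsto_atTop
  have hgap : ∀ n : ℕ, (φ n : ℝ) + n ≤ φ (2 * n) := by
    intro n
    have : φ n + n ≤ φ (2 * n) := by
      have := hφ.add_le_nat n n
      rwa [← two_mul, add_comm] at this
    exact_mod_cast this
  have hqA : q ∈ Λ.aubrySet c := by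
    have h2 : Tendsto (fun n : ℕ => 2 * n) atTop atTop :=
      tendsto_id.const_mul_atTop' two_pos
    refine hc.mem_aubrySet (hc.peierls_le_of_tendsto (hq.comp h2) hq
      (t := fun n => (φ (2 * n) : ℝ) - φ n) (e := fun n => u (p n) - u (p (2 * n))) ?_ ?_ ?_)
    · exact tendsto_atTop_mono (fun n => by linarith [hgap n]) tendsto_natCast_atTop_atTop
    · simpa using huq.sub (huq.comp h2)
    · filter_upwards [eventually_gt_atTop 0] with n hn
      have hn' : (0 : ℝ) < n := by exact_mod_cast hn
      have := hpiece (-(φ (2 * n) : ℝ)) (-(φ n : ℝ)) (by linarith [hgap n]) (by simp)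
      rwa [neg_sub_neg] at this
  refine ⟨q, hqA, le_antisymm (hc.le_add_peierls hdom q x) ?_⟩
  have := hc.peierls_le_of_tendsto hq (tendsto_const_nhds (x := x)) hφt
    (tendsto_const_nhds.sub huq) (e₀ := u x - u q) (e := fun n => u x - u (p n)) ?_
  · linarith
  · filter_upwards [hφt.eventually_gt_atTop 0] with n hn
    have := hpiece (-(φ n : ℝ)) 0 (by linarith) le_rfl
    rwa [h0, zero_sub, neg_neg] at this

end TonelliLagrangian

/-- the Aubry set is nonempty and every backward weak KAM solution
satisfies the representation formula `u(x) = min_{q ∈ 𝒜} (u(q) + h(q,x))`. -/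
theorem aubry_nonempty_and_representation
    (Γ : MetricGraph) (Λ : TonelliLagrangian Γ) (c : ℝ) (hc : Λ.IsCriticalValue c) :
    (Λ.aubrySet c).Nonempty ∧
    ∀ u : Γ.G → ℝ, Λ.BackwardWeakKAM c u → ∀ x : Γ.G,
      IsLeast {r : ℝ | ∃ q ∈ Λ.aubrySet c, r = u q + Λ.peierls c q x} (u x) := by
  exact ⟨hc.aubrySet_nonempty, fun u hu x => ⟨hc.exists_eq_add_peierls hu x, by
    rintro _ ⟨q, -, rfl⟩
    exact hc.le_add_peierls hu.2.1 q x⟩⟩
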